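/- arXiv:2605.20091 — 2 statements merged into one kernel-verified Lean document; each statement's English description precedes it below -/
import Mathlib

section
/- Let H be a real Hilbert space, Ω a set, Φ : Ω → H a map, f ∈ H, and X ⊆ Ω a finite set. Let P_V denote the orthogonal projection onto V := span{Φ(x) : x ∈ X}, let s_{f,X} := P_V f, and define the power function P_X(x) := ‖Φ(x) − P_V Φ(x)‖ for x ∈ Ω. Then for every x ∈ Ω, |⟨f, Φ(x)⟩ − ⟨s_{f,X}, Φ(x)⟩| ≤ P_X(x) · √(‖f‖² − ‖s_{f,X}‖²) ≤ P_X(x) · ‖f‖. (In RKHS notation: |f(x) − s_{f,X}(x)| ≤ P_X(x) √(‖f‖²_H − ‖s_{f,X}‖²_H) ≤ P_X(x) ‖f‖_H.) -/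
open scoped InnerProductSpace

/-- With `P` the orthogonal projection onto `V = span{Φ(x) : x ∈ X}`,
`s = P f` the kernel interpolant and `P_X(x) = ‖Φ(x) - P(Φ(x))‖` the power function,
for every `x ∈ Ω`:
`|⟨f, Φ(x)⟩ - ⟨s, Φ(x)⟩| ≤ P_X(x) √(‖f‖² - ‖s‖²) ≤ P_X(x) ‖f‖`. -/
theorem power_function_error_bound
    {H : Type*} [NormedAddCommGroup H] [InnerProductSpace ℝ H]
    {Ω : Type*} (Φ : Ω → H) (f : H) (X : Finset Ω)
    (P : H → H)
    (hP_mem : ∀ u : H, P u ∈ Submodule.span ℝ (Φ '' ↑X))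
    (hP_orth : ∀ u : H, ∀ v ∈ Submodule.span ℝ (Φ '' ↑X), ⟪u - P u, v⟫_ℝ = 0) :
    ∀ x : Ω,
      |⟪f, Φ x⟫_ℝ - ⟪P f, Φ x⟫_ℝ| ≤
        ‖Φ x - P (Φ x)‖ * Real.sqrt (‖f‖ ^ 2 - ‖P f‖ ^ 2) ∧
      ‖Φ x - P (Φ x)‖ * Real.sqrt (‖f‖ ^ 2 - ‖P f‖ ^ 2) ≤ ‖Φ x - P (Φ x)‖ * ‖f‖ := by
  intro x
  have hpyth : ‖f‖ ^ 2 - ‖P f‖ ^ 2 = ‖f - P f‖ ^ 2 := by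
    have h := hP_orth f (P f) (hP_mem f)
    have h2 := norm_add_sq_real (f - P f) (P f)
    rw [sub_add_cancel, h] at h2
    linarith
  have hsq : Real.sqrt (‖f‖ ^ 2 - ‖P f‖ ^ 2) = ‖f - P f‖ := by
    rw [hpyth, Real.sqrt_sq (norm_nonneg _)]
  have hle : ‖f - P f‖ ≤ ‖f‖ := by
    refine (pow_le_pow_iff_left₀ (norm_nonneg _) (norm_nonneg _) two_ne_zero).mp ?_
    nlinarith [sq_nonneg ‖P f‖]
  have hin : ⟪f, Φ x⟫_ℝ - ⟪P f, Φ x⟫_ℝ = ⟪f - P f, Φ x - P (Φ x)⟫_ℝ := by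
    rw [inner_sub_right, hP_orth f _ (hP_mem (Φ x)), inner_sub_left, sub_zero]
  rw [hsq, hin]
  refine ⟨?_, mul_le_mul_of_nonneg_left hle (norm_nonneg _)⟩
  rw [mul_comm]
  exact abs_real_inner_le_norm _ _
end

section
/- Let H be a real Hilbert space, Ω a set, Φ : Ω → H a map such that Φ(x), x ∈ X, are linearly independent for every finite X ⊆ Ω, and f : Ω → ℝ a function. Then the following are equivalent: (i) there exists g ∈ H with ⟨g, Φ(x)⟩ = f(x) for all x ∈ Ω; (ii) there exists C > 0 such that ‖s_{f,X}‖ ≤ C for every finite subset X ⊆ Ω, where s_{f,X} is the minimum-norm interpolant of f on X. Moreover, when (i) holds with representer g of minimal norm, one may take C = ‖g‖ in (ii). -/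
open scoped InnerProductSpace

/-- Assuming all finite families `Φ(x), x ∈ X` are linearly independent,
a function `f : Ω → ℝ` lies in the RKHS (i.e. has a representer `g ∈ H`) iff the norms
of its minimum-norm interpolants on finite sets are uniformly bounded; moreover, when a
minimal-norm representer `g` exists, one may take `C = ‖g‖`. -/
theorem mem_rkhs_iff_bounded_interpolant_norms
    {H : Type*} [NormedAddCommGroup H] [InnerProductSpace ℝ H] [CompleteSpace H]
    {Ω : Type*} (Φ : Ω → H)
    (hli : ∀ X : Finset Ω, LinearIndependent ℝ (fun x : X => Φ x.1))
    (f : Ω → ℝ) :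
    ((∃ g : H, ∀ x : Ω, ⟪g, Φ x⟫_ℝ = f x) ↔
      (∃ C : ℝ, 0 < C ∧ ∀ (X : Finset Ω) (s : H),
        s ∈ Submodule.span ℝ (Φ '' ↑X) →
        (∀ x ∈ X, ⟪s, Φ x⟫_ℝ = f x) → ‖s‖ ≤ C)) ∧
    (∀ g : H, (∀ x : Ω, ⟪g, Φ x⟫_ℝ = f x) →
      (∀ g' : H, (∀ x : Ω, ⟪g', Φ x⟫_ℝ = f x) → ‖g‖ ≤ ‖g'‖) →
      ∀ (X : Finset Ω) (s : H),
        s ∈ Submodule.span ℝ (Φ '' ↑X) →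
        (∀ x ∈ X, ⟪s, Φ x⟫_ℝ = f x) → ‖s‖ ≤ ‖g‖) := by
  have key : ∀ g : H, (∀ x : Ω, ⟪g, Φ x⟫_ℝ = f x) → ∀ (X : Finset Ω) (s : H),
      s ∈ Submodule.span ℝ (Φ '' ↑X) →
      (∀ x ∈ X, ⟪s, Φ x⟫_ℝ = f x) → ‖s‖ ≤ ‖g‖ := by
    intro g hg X s hs hsx
    have h : ∀ v ∈ Submodule.span ℝ (Φ '' (X : Set Ω)), ⟪s, v⟫_ℝ = ⟪g, v⟫_ℝ := by
      intro v hv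
      induction hv using Submodule.span_induction with
      | mem v hv =>
        obtain ⟨x, hx, rfl⟩ := hv
        rw [hsx x hx, hg x]
      | zero => simp
      | add a b _ _ ha hb => rw [inner_add_right, inner_add_right, ha, hb]
      | smul c a _ ha => rw [inner_smul_right, inner_smul_right, ha]
    have h1 := h s hs
    rw [real_inner_self_eq_norm_mul_norm] at h1
    have h2 := real_inner_le_norm g s
    by_contra hlt
    push Not at hlt
    have : 0 < ‖s‖ := lt_of_le_of_lt (norm_nonneg g) hlt
    nlinarith
  refine ⟨⟨?_, ?_⟩, fun g hg _ => key g hg⟩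
  · rintro ⟨g, hg⟩
    refine ⟨‖g‖ + 1, by positivity, fun X s hs hsx => ?_⟩
    have := key g hg X s hs hsx
    linarith
  · rintro ⟨C, hC, hb⟩
    have hΦ : LinearIndependent ℝ Φ :=
      linearIndependent_iff_finset_linearIndependent.2 hli
    obtain ⟨L, hL⟩ := LinearMap.exists_extend ((Module.Basis.span hΦ).constr ℝ f)
    have hLx : ∀ x, L (Φ x) = f x := by
      intro x
      have h1 := LinearMap.congr_fun hL (Module.Basis.span hΦ x)
      rw [Module.Basis.constr_basis] at h1
      simpa [Module.Basis.span_apply] using h1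
    have hbound : ∀ v ∈ Submodule.span ℝ (Set.range Φ), ‖L v‖ ≤ C * ‖v‖ := by
      intro v hv
      obtain ⟨X, hX⟩ : ∃ X : Finset Ω, v ∈ Submodule.span ℝ (Φ '' (X : Set Ω)) := by
        rw [Finsupp.mem_span_range_iff_exists_finsupp] at hv
        obtain ⟨c, rfl⟩ := hv
        refine ⟨c.support, Submodule.sum_mem _ fun i hi => Submodule.smul_mem _ _ ?_⟩
        exact Submodule.subset_span ⟨i, hi, rfl⟩
      haveI : FiniteDimensional ℝ (Submodule.span ℝ (Φ '' (X : Set Ω))) :=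
        FiniteDimensional.span_of_finite ℝ (X.finite_toSet.image Φ)
      let ℓ := LinearMap.toContinuousLinearMap
        (L.domRestrict (Submodule.span ℝ (Φ '' (X : Set Ω))))
      let s := (InnerProductSpace.toDual ℝ _).symm ℓ
      have hs : ∀ w : Submodule.span ℝ (Φ '' (X : Set Ω)), ⟪(s : H), (w : H)⟫_ℝ = L w := by
        intro w
        exact InnerProductSpace.toDual_symm_apply (𝕜 := ℝ) (x := w) (y := ℓ)
      have hsC : ‖(s : H)‖ ≤ C := hb X s s.2 fun x hx => by
        rw [hs ⟨Φ x, Submodule.subset_span ⟨x, hx, rfl⟩⟩, hLx]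
      rw [← hs ⟨v, hX⟩]
      exact (norm_inner_le_norm _ _).trans (by gcongr)
    let M : StrongDual ℝ (Submodule.span ℝ (Set.range Φ)) :=
      (L.domRestrict (Submodule.span ℝ (Set.range Φ))).mkContinuous C
        fun v => hbound v v.2
    obtain ⟨G, hG, -⟩ := exists_extension_norm_eq _ M
    refine ⟨(InnerProductSpace.toDual ℝ H).symm G, fun x => ?_⟩
    rw [InnerProductSpace.toDual_symm_apply, ← hLx]
    exact hG ⟨Φ x, Submodule.subset_span ⟨x, rfl⟩⟩
end
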